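/- arXiv:2209.14075 — 3 statements merged into one kernel-verified Lean document; each statement's English description precedes it below -/
import Mathlib

section
/- For every real s ≥ 3, the map x ↦ φ_s′(x) = ∫₀¹ (1 − z^{s−1}) / (1 − z^{s−1} − x²(z² − z^{s−1}))^{3/2} dz is monotonically increasing on [0,1]; in particular φ_s′(x) ≥ φ_s′(0) = ∫₀¹ dz/√(1 − z^{s−1}) for all x ∈ [0,1). -/
/-!
For `s ≥ 3` and `0 < z < 1` one has `z ^ (s - 1) ≤ z ^ 2`, so the base of the power in the
denominator, `D x = 1 - z ^ (s - 1) - x ^ 2 * (z ^ 2 - z ^ (s - 1))`, decreases in `x ∈ [0, 1]`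
and stays above `D 1 = 1 - z ^ 2 > 0`. As the numerator is nonnegative, the integrand increases
in `x` at every `z`, and it remains to know that it is integrable for each `x`. Bernoulli's
inequality gives `1 - z ^ (s - 1) ≤ (s - 1) * (1 - z)`, while `D x ≥ 1 - z ^ 2 ≥ 1 - z`, so the
integrand is dominated by `(s - 1) * (1 - z) ^ (-1/2)`, uniformly in `x`
(`intervalIntegrable_integrand`).
-/

open Real Set MeasureTheory

/-- The derivative of the deviation-angle function:
`φ_s′(x) = ∫₀¹ (1 − z^(s−1)) / (1 − z^(s−1) − x²(z² − z^(s−1)))^(3/2) dz`. -/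
noncomputable def phiSDeriv (s x : ℝ) : ℝ :=
  ∫ z in (0:ℝ)..1,
    (1 - z ^ (s - 1)) / (1 - z ^ (s - 1) - x ^ 2 * (z ^ 2 - z ^ (s - 1))) ^ ((3:ℝ)/2)

lemma rpow_le_sq_of_three_le {s z : ℝ} (hs : 3 ≤ s) (hz : z ∈ Ioo (0:ℝ) 1) :
    z ^ (s - 1) ≤ z ^ 2 := by
  rw [← Real.rpow_natCast z 2]
  exact Real.rpow_le_rpow_of_exponent_ge hz.1 hz.2.le (by push_cast; linarith)

lemma one_sub_sq_le_base {s x z : ℝ} (hs : 3 ≤ s) (hx : x ∈ Icc (0:ℝ) 1)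
    (hz : z ∈ Ioo (0:ℝ) 1) :
    1 - z ^ 2 ≤ 1 - z ^ (s - 1) - x ^ 2 * (z ^ 2 - z ^ (s - 1)) := by
  have h := rpow_le_sq_of_three_le hs hz
  have hx2 : x ^ 2 ≤ 1 := pow_le_one₀ hx.1 hx.2
  nlinarith

lemma one_sub_rpow_nonneg {s z : ℝ} (hs : 3 ≤ s) (hz : z ∈ Ioo (0:ℝ) 1) :
    0 ≤ 1 - z ^ (s - 1) :=
  sub_nonneg.2 (Real.rpow_le_one hz.1.le hz.2.le (by linarith))

/-- The dominating function comes from Bernoulli's inequality in the numerator and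
`1 - z ≤ 1 - z ^ 2` in the denominator. -/
lemma integrand_le {s x z : ℝ} (hs : 3 ≤ s) (hx : x ∈ Icc (0:ℝ) 1) (hz : z ∈ Ioo (0:ℝ) 1) :
    (1 - z ^ (s - 1)) / (1 - z ^ (s - 1) - x ^ 2 * (z ^ 2 - z ^ (s - 1))) ^ ((3:ℝ)/2)
      ≤ (s - 1) * (1 - z) ^ (-(1:ℝ)/2) := by
  have hz1 : 0 < 1 - z := sub_pos.2 hz.2
  have hD : 1 - z ≤ 1 - z ^ (s - 1) - x ^ 2 * (z ^ 2 - z ^ (s - 1)) := by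
    have := one_sub_sq_le_base hs hx hz
    nlinarith [hz.1]
  have hN : 1 - z ^ (s - 1) ≤ (s - 1) * (1 - z) := by
    have := one_add_mul_self_le_rpow_one_add (s := z - 1) (by linarith [hz.1])
      (p := s - 1) (by linarith)
    rw [add_sub_cancel] at this
    linarith
  have hpow : (1 - z) * ((1 - z) ^ ((3:ℝ)/2))⁻¹ = (1 - z) ^ (-(1:ℝ)/2) := by
    rw [← Real.rpow_neg hz1.le]
    nth_rewrite 1 [← Real.rpow_one (1 - z)]
    rw [← Real.rpow_add hz1]
    norm_num
  calc _ ≤ (s - 1) * (1 - z) / (1 - z) ^ ((3:ℝ)/2) := by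
        have : 0 ≤ (s - 1) * (1 - z) := mul_nonneg (by linarith) hz1.le
        gcongr
    _ = _ := by rw [← hpow]; ring

lemma intervalIntegrable_integrand {s x : ℝ} (hs : 3 ≤ s) (hx : x ∈ Icc (0:ℝ) 1) :
    IntervalIntegrable (fun z : ℝ =>
      (1 - z ^ (s - 1)) / (1 - z ^ (s - 1) - x ^ 2 * (z ^ 2 - z ^ (s - 1))) ^ ((3:ℝ)/2))
      volume 0 1 := by
  have hg : IntervalIntegrable (fun z : ℝ => (s - 1) * (1 - z) ^ (-(1:ℝ)/2)) volume 0 1 := by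
    have h := (intervalIntegral.intervalIntegrable_rpow' (a := 1) (b := 0)
      (r := -(1:ℝ)/2) (by norm_num)).comp_sub_left 1
    simp only [sub_self, sub_zero] at h
    exact h.const_mul _
  refine hg.mono_fun (Measurable.aestronglyMeasurable (by fun_prop)) ?_
  rw [uIoc_of_le zero_le_one, ← restrict_Ioo_eq_restrict_Ioc]
  filter_upwards [ae_restrict_mem measurableSet_Ioo] with z hz
  have hD : 0 ≤ 1 - z ^ (s - 1) - x ^ 2 * (z ^ 2 - z ^ (s - 1)) := by
    have := one_sub_sq_le_base hs hx hz
    nlinarith [hz.1, hz.2]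
  rw [Real.norm_of_nonneg (div_nonneg (one_sub_rpow_nonneg hs hz) (Real.rpow_nonneg hD _))]
  exact (integrand_le hs hx hz).trans (le_abs_self _)

lemma monotoneOn_phiSDeriv {s : ℝ} (hs : 3 ≤ s) : MonotoneOn (phiSDeriv s) (Icc 0 1) := by
  intro x hx y hy hxy
  refine intervalIntegral.integral_mono_on_of_le_Ioo zero_le_one
    (intervalIntegrable_integrand hs hx) (intervalIntegrable_integrand hs hy) fun z hz => ?_
  have hD : 0 < 1 - z ^ (s - 1) - y ^ 2 * (z ^ 2 - z ^ (s - 1)) := by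
    have := one_sub_sq_le_base hs hy hz
    nlinarith [hz.1, hz.2]
  have hN := one_sub_rpow_nonneg hs hz
  have hw : 0 ≤ z ^ 2 - z ^ (s - 1) := sub_nonneg.2 (rpow_le_sq_of_three_le hs hz)
  have hx0 : 0 ≤ x := hx.1
  gcongr

/-- At `x = 0` the integrands agree on all of `[0, 1]`: at `z = 1` both sides are `0` by the
convention for division by zero. -/
lemma phiSDeriv_zero {s : ℝ} (hs : 3 ≤ s) :
    phiSDeriv s 0 = ∫ z in (0:ℝ)..1, 1 / Real.sqrt (1 - z ^ (s - 1)) := by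
  refine intervalIntegral.integral_congr fun z hz => ?_
  rw [uIcc_of_le zero_le_one] at hz
  have h0 : 0 ≤ 1 - z ^ (s - 1) :=
    sub_nonneg.2 (Real.rpow_le_one hz.1 hz.2 (by linarith))
  simp only [ne_eq, OfNat.ofNat_ne_zero, not_false_eq_true, zero_pow, zero_mul, sub_zero]
  rcases h0.eq_or_lt with h | h
  · simp [← h]
  · rw [show (3:ℝ)/2 = 1 + 1/2 by norm_num, Real.rpow_add h, Real.rpow_one, Real.sqrt_eq_rpow]
    field_simp

/-- For `s ≥ 3`, `x ↦ φ_s′(x)` is monotonically increasing on `[0,1]`; in particular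
`φ_s′(x) ≥ φ_s′(0) = ∫₀¹ dz/√(1 − z^(s−1))` for all `x ∈ [0,1)`. -/
theorem stmt6 (s : ℝ) (hs : 3 ≤ s) :
    MonotoneOn (phiSDeriv s) (Icc 0 1) ∧
    phiSDeriv s 0 = (∫ z in (0:ℝ)..1, 1 / Real.sqrt (1 - z ^ (s - 1))) ∧
    ∀ x ∈ Ico (0:ℝ) 1, phiSDeriv s 0 ≤ phiSDeriv s x := by
  exact ⟨monotoneOn_phiSDeriv hs, phiSDeriv_zero hs, fun x hx =>
    monotoneOn_phiSDeriv hs ⟨le_rfl, zero_le_one⟩ ⟨hx.1, hx.2.le⟩ hx.1⟩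
end

section
/- Let s > 2 and let b_s be the angular part of the collision kernel. Then lim_{θ→0⁺} θ^{1+2/(s−1)} · b_s(cos θ) · sin θ = C_s, where C_s = (2^{4/(s−1)}/(s−1)) · (√π Γ(s/2)/Γ((s−1)/2))^{2/(s−1)}. -/
/-!
Write `p = s - 1 > 1` and `D(x, z) = 1 - z ^ p - x ^ 2 * (z ^ 2 - z ^ p)`. Since `D` is the convex
combination `x ^ 2 * (1 - z ^ 2) + (1 - x ^ 2) * (1 - z ^ p)`, one has `1 - z ≤ D(x, z)` for
`|x| ≤ 1` and `0 < z < 1` (`one_sub_le_radD`). Because `D + x ^ 2 * (z ^ 2 - z ^ p) = 1 - z ^ p`,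
differentiating under the integral sign gives
`φ_s'(x) = ψ(x) = ∫₀¹ (1 - z ^ p) / D ^ (3/2) dz > 0` (`hasDerivAt_phiS`, `psi_pos`), and the bound
`1 - z ^ p ≤ p * (1 - z)` dominates this integrand by `p / √(1 - z)` uniformly in `x ∈ [-1, 1]`.
So `φ_s` is strictly increasing on `[0, 1]` with `φ_s(1) = π / 2`, and it has the one-sided
derivative `G = ψ(1)` at `1`. An integration by parts and a Beta integral give
`G = √π Γ(s/2) / Γ((s-1)/2)` (`psi_one`).

With `X = x_s((π - θ) / 2)` and `θ → 0⁺`, it follows that `X → 1⁻`, that `x_s' = 1 / ψ(X) → 1 / G`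
by the chain rule, and that `(1 - X ^ 2) / θ → 1 / G` from the slope of `φ_s` at `1`. Finally
`scaling_identity` writes the quantity in the theorem as a continuous function of
`X`, `x_s'` and `(1 - X ^ 2) / θ`.
-/

open Real Set MeasureTheory Filter

/-- The deviation-angle function `φ_s(x) = x ∫₀¹ dz / √(1 − z^(s−1) − x²(z² − z^(s−1)))`. -/
noncomputable def phiS (s x : ℝ) : ℝ :=
  x * ∫ z in (0:ℝ)..1, 1 / Real.sqrt (1 - z ^ (s - 1) - x ^ 2 * (z ^ 2 - z ^ (s - 1)))

/-- The impact parameter as a function of the root `x`: `β_s(x) = x/(1 − x²)^(1/(s−1))`. -/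
noncomputable def betaS (s x : ℝ) : ℝ := x / (1 - x ^ 2) ^ (1 / (s - 1))

/-- Its derivative. -/
noncomputable def betaS' (s x : ℝ) : ℝ :=
  2 / (s - 1) * (1 - x ^ 2) ^ (-(s / (s - 1))) +
    (s - 3) / (s - 1) * (1 - x ^ 2) ^ (-(1 / (s - 1)))

/-- The angular part of the collision kernel, as a function of the deviation angle `θ`:
`b_s(cos θ) = (1/2)·2^(4/(s−1))/sin θ · β_s(x_s((π−θ)/2)) β_s′(x_s((π−θ)/2)) x_s′((π−θ)/2)`,
expressed in terms of the inverse `x_s` of `φ_s` and its derivative `x_s′`. -/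
noncomputable def bAng (xs xs' : ℝ → ℝ → ℝ) (s θ : ℝ) : ℝ :=
  1 / 2 * (2:ℝ) ^ (4 / (s - 1)) / Real.sin θ *
    (betaS s (xs s ((π - θ) / 2)) * betaS' s (xs s ((π - θ) / 2)) * xs' s ((π - θ) / 2))

open scoped Topology Interval

/-- The radicand `D(x, z)` in the integral defining `phiS s`, with `p = s - 1`. -/
noncomputable def radD (p x z : ℝ) : ℝ := 1 - z ^ p - x ^ 2 * (z ^ 2 - z ^ p)

/-- `ψ(x) = ∫₀¹ (1 - z ^ p) / D(x, z) ^ (3/2) dz`, the derivative of `phiS (p + 1)` on `(-1, 1)`.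
It is also used at the endpoint `x = 1`. -/
noncomputable def psi (p x : ℝ) : ℝ :=
  ∫ z in (0:ℝ)..1, (1 - z ^ p) / (radD p x z * √(radD p x z))

/-! ### Bounds on the integrands -/

lemma rpow_le_self_of_Ioo {p z : ℝ} (hp : 1 < p) (hz : z ∈ Ioo (0:ℝ) 1) : z ^ p ≤ z := by
  simpa using Real.rpow_le_rpow_of_exponent_ge hz.1 hz.2.le hp.le

/-- Bernoulli's inequality. -/
lemma one_sub_rpow_le {p z : ℝ} (hp : 1 < p) (hz : z ∈ Ioo (0:ℝ) 1) :
    1 - z ^ p ≤ p * (1 - z) := by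
  have h := one_add_mul_self_le_rpow_one_add (s := z - 1) (by linarith [hz.1]) hp.le
  rw [show 1 + (z - 1) = z by ring] at h
  linarith

lemma one_sub_le_radD {p x z : ℝ} (hp : 1 < p) (hx : x ∈ Icc (-1:ℝ) 1)
    (hz : z ∈ Ioo (0:ℝ) 1) : 1 - z ≤ radD p x z := by
  have h1 := rpow_le_self_of_Ioo hp hz
  have h2 : x ^ 2 ≤ 1 := by nlinarith [hx.1, hx.2]
  have h3 : z ^ 2 ≤ z := by nlinarith [hz.1, hz.2]
  -- a convex combination of `1 - z ^ 2` and `1 - z ^ p`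
  have : radD p x z = x ^ 2 * (1 - z ^ 2) + (1 - x ^ 2) * (1 - z ^ p) := by unfold radD; ring
  rw [this]
  nlinarith [mul_le_mul_of_nonneg_left h3 (sq_nonneg x),
    mul_le_mul_of_nonneg_left h1 (sub_nonneg.2 h2)]

/-- The endpoint `z = 1`, where `D(x, z)` vanishes, is negligible. -/
lemma ae_Ioo {P : ℝ → Prop} (h : ∀ z ∈ Ioo (0:ℝ) 1, P z) :
    ∀ᵐ z ∂(volume : Measure ℝ), z ∈ Ι (0:ℝ) 1 → P z := by
  filter_upwards [Measure.ae_ne volume (1:ℝ)] with z hz1 hz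
  rw [uIoc_of_le zero_le_one] at hz
  exact h z ⟨hz.1, lt_of_le_of_ne hz.2 hz1⟩

lemma intervalIntegrable_bound (c : ℝ) :
    IntervalIntegrable (fun z : ℝ => c / √(1 - z)) volume 0 1 := by
  have h : IntervalIntegrable (fun z : ℝ => z ^ (-(1/2) : ℝ)) volume 0 1 :=
    intervalIntegral.intervalIntegrable_rpow' (by norm_num)
  have h2 := ((h.comp_sub_left 1).symm.const_mul c)
  simp only [sub_zero, sub_self] at h2
  refine h2.congr_ae ?_
  rw [EventuallyEq, ae_restrict_iff' measurableSet_uIoc]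
  refine ae_Ioo fun z hz => ?_
  have : 0 < 1 - z := by linarith [hz.2]
  rw [Real.sqrt_eq_rpow, Real.rpow_neg this.le, div_eq_mul_inv c]

lemma norm_phi_integrand_le {p x z : ℝ} (hp : 1 < p) (hx : x ∈ Icc (-1:ℝ) 1)
    (hz : z ∈ Ioo (0:ℝ) 1) : ‖x * (1 / √(radD p x z))‖ ≤ 1 / √(1 - z) := by
  have h0 : 0 < 1 - z := by linarith [hz.2]
  have h := one_sub_le_radD hp hx hz
  have h1 : |x| ≤ 1 := abs_le.2 ⟨hx.1, hx.2⟩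
  rw [norm_mul, Real.norm_eq_abs, Real.norm_of_nonneg (by positivity)]
  calc |x| * (1 / √(radD p x z)) ≤ 1 * (1 / √(1 - z)) := by
        gcongr
    _ = _ := one_mul _

lemma norm_psi_integrand_le {p x z : ℝ} (hp : 1 < p) (hx : x ∈ Icc (-1:ℝ) 1)
    (hz : z ∈ Ioo (0:ℝ) 1) :
    ‖(1 - z ^ p) / (radD p x z * √(radD p x z))‖ ≤ p / √(1 - z) := by
  have h0 : 0 < 1 - z := by linarith [hz.2]
  have h := one_sub_le_radD hp hx hz
  have h1 := rpow_le_self_of_Ioo hp hz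
  have h2 := one_sub_rpow_le hp hz
  have h3 : 0 < radD p x z := h0.trans_le h
  rw [Real.norm_of_nonneg (div_nonneg (by linarith) (by positivity))]
  calc (1 - z ^ p) / (radD p x z * √(radD p x z))
      ≤ (p * (1 - z)) / ((1 - z) * √(1 - z)) := by gcongr
    _ = p / √(1 - z) := by
      have := Real.sqrt_pos.2 h0
      field_simp

/-! ### Regularity of `φ_s` and of its derivative -/

lemma phiS_eq (s x : ℝ) :
    phiS s x = ∫ z in (0:ℝ)..1, x * (1 / √(radD (s - 1) x z)) := by
  rw [phiS, intervalIntegral.integral_const_mul]; rfl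

lemma measurable_phi_integrand (p x : ℝ) :
    Measurable fun z => x * (1 / √(radD p x z)) := by
  unfold radD; fun_prop

lemma measurable_psi_integrand (p x : ℝ) :
    Measurable fun z => (1 - z ^ p) / (radD p x z * √(radD p x z)) := by
  unfold radD; fun_prop

lemma intervalIntegrable_of_bound {f : ℝ → ℝ} {c : ℝ} (hf : Measurable f)
    (h : ∀ z ∈ Ioo (0:ℝ) 1, ‖f z‖ ≤ c / √(1 - z)) : IntervalIntegrable f volume 0 1 := by
  refine (intervalIntegrable_bound c).mono_fun' hf.aestronglyMeasurable ?_
  rw [EventuallyLE, ae_restrict_iff' measurableSet_uIoc]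
  exact ae_Ioo h

lemma hasDerivAt_phiS {s x : ℝ} (hs : 2 < s) (hx : x ∈ Ioo (-1:ℝ) 1) :
    HasDerivAt (phiS s) (psi (s - 1) x) x := by
  have hp : 1 < s - 1 := by linarith
  rw [show phiS s = fun x => ∫ z in (0:ℝ)..1, x * (1 / √(radD (s - 1) x z)) from
    funext (phiS_eq s)]
  refine (intervalIntegral.hasDerivAt_integral_of_dominated_loc_of_deriv_le
    (bound := fun z => (s - 1) / √(1 - z))
    (F' := fun x z => (1 - z ^ (s - 1)) / (radD (s - 1) x z * √(radD (s - 1) x z)))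
    (Ioo_mem_nhds hx.1 hx.2)
    (Eventually.of_forall fun x => (measurable_phi_integrand _ x).aestronglyMeasurable)
    (intervalIntegrable_of_bound (measurable_phi_integrand _ x)
      fun z hz => norm_phi_integrand_le hp (Ioo_subset_Icc_self hx) hz)
    (measurable_psi_integrand _ x).aestronglyMeasurable
    (ae_Ioo fun z hz y hy => norm_psi_integrand_le hp (Ioo_subset_Icc_self hy) hz)
    (intervalIntegrable_bound _) (ae_Ioo fun z hz y hy => ?_)).2
  have h0 : 0 < radD (s - 1) y z :=
    lt_of_lt_of_le (by linarith [hz.2]) (one_sub_le_radD hp (Ioo_subset_Icc_self hy) hz)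
  have hD : HasDerivAt (fun y => radD (s - 1) y z)
      (-(2 * y * (z ^ 2 - z ^ (s - 1)))) y := by
    unfold radD
    have := (((hasDerivAt_id y).pow 2).mul_const (z ^ 2 - z ^ (s - 1))).const_sub
      (1 - z ^ (s - 1))
    simpa using this
  have h1 := (hasDerivAt_id y).mul ((hD.sqrt h0.ne').inv (Real.sqrt_pos.2 h0).ne')
  simp only [one_div]
  refine h1.congr_deriv ?_
  have hsq : √(radD (s - 1) y z) ^ 2 = radD (s - 1) y z := Real.sq_sqrt h0.le
  have hpos := Real.sqrt_pos.2 h0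
  simp only [id, Pi.inv_apply]
  generalize √(radD (s - 1) y z) = r at *
  -- the two terms of the product rule combine through `1 - z ^ p = D + y ^ 2 * (z ^ 2 - z ^ p)`
  have hr : 1 - z ^ (s - 1) = r ^ 2 + y ^ 2 * (z ^ 2 - z ^ (s - 1)) := by
    rw [hsq]; unfold radD; ring
  rw [hr, ← hsq]
  field_simp

lemma psi_pos {p x : ℝ} (hp : 1 < p) (hx : x ∈ Icc (-1:ℝ) 1) : 0 < psi p x := by
  refine intervalIntegral.intervalIntegral_pos_of_pos_on
    (intervalIntegrable_of_bound (measurable_psi_integrand _ x)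
      fun z hz => norm_psi_integrand_le hp hx hz) (fun z hz => ?_) zero_lt_one
  have h0 : 0 < 1 - z := by linarith [hz.2]
  have h3 : 0 < radD p x z := h0.trans_le (one_sub_le_radD hp hx hz)
  have h1 := rpow_le_self_of_Ioo hp hz
  exact div_pos (by linarith) (by positivity)

lemma continuousOn_phiS {s : ℝ} (hs : 2 < s) : ContinuousOn (phiS s) (Icc (-1) 1) := by
  have hp : 1 < s - 1 := by linarith
  rw [show phiS s = fun x => ∫ z in (0:ℝ)..1, x * (1 / √(radD (s - 1) x z)) from
    funext (phiS_eq s)]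
  intro x hx
  refine intervalIntegral.continuousWithinAt_of_dominated_interval
    (bound := fun z => 1 / √(1 - z))
    (Eventually.of_forall fun x => (measurable_phi_integrand _ x).aestronglyMeasurable)
    ?_ (intervalIntegrable_bound _) (ae_Ioo fun z hz => ?_)
  · filter_upwards [self_mem_nhdsWithin] with y hy
    exact ae_Ioo fun z hz => norm_phi_integrand_le hp hy hz
  · have h0 : 0 < radD (s - 1) x z :=
      lt_of_lt_of_le (by linarith [hz.2]) (one_sub_le_radD hp hx hz)
    have hc : ContinuousAt (fun y => radD (s - 1) y z) x := by unfold radD; fun_prop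
    exact (continuousAt_id.mul (continuousAt_const.div hc.sqrt
      (Real.sqrt_pos.2 h0).ne')).continuousWithinAt

lemma continuousOn_psi {p : ℝ} (hp : 1 < p) : ContinuousOn (psi p) (Icc (-1) 1) := by
  intro x hx
  refine intervalIntegral.continuousWithinAt_of_dominated_interval
    (bound := fun z => p / √(1 - z))
    (Eventually.of_forall fun x => (measurable_psi_integrand _ x).aestronglyMeasurable)
    ?_ (intervalIntegrable_bound _) (ae_Ioo fun z hz => ?_)
  · filter_upwards [self_mem_nhdsWithin] with y hy
    exact ae_Ioo fun z hz => norm_psi_integrand_le hp hy hz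
  · have h0 : 0 < radD p x z :=
      lt_of_lt_of_le (by linarith [hz.2]) (one_sub_le_radD hp hx hz)
    have hc : ContinuousAt (fun y => radD p y z) x := by unfold radD; fun_prop
    exact (continuousAt_const.div (hc.mul hc.sqrt)
      (mul_pos h0 (Real.sqrt_pos.2 h0)).ne').continuousWithinAt

/-! ### The values `φ_s(1)` and `ψ(1)` -/

lemma phiS_one (s : ℝ) (hs : 2 < s) : phiS s 1 = π / 2 := by
  have hp : 1 < s - 1 := by linarith
  have hint : IntervalIntegrable (fun z : ℝ => 1 * (1 / √(radD (s - 1) 1 z))) volume 0 1 :=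
    intervalIntegrable_of_bound (measurable_phi_integrand _ 1)
      fun z hz => norm_phi_integrand_le hp (by simp) hz
  rw [phiS_eq, intervalIntegral.integral_eq_sub_of_hasDerivAt_of_le zero_le_one
    Real.continuous_arcsin.continuousOn (fun z hz => ?_) hint]
  · simp
  · have := Real.hasDerivAt_arcsin (x := z) (by linarith [hz.1]) (by linarith [hz.2])
    refine this.congr_deriv ?_
    simp only [radD]
    rw [one_mul]; congr 2; ring

lemma betaIntegral_real {u v : ℝ} (hu : 0 < u) (hv : 0 < v) :
    ∫ y in (0:ℝ)..1, y ^ (u - 1) * (1 - y) ^ (v - 1) =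
      Real.Gamma u * Real.Gamma v / Real.Gamma (u + v) := by
  have h := ProbabilityTheory.beta_eq_betaIntegralReal u v hu hv
  rw [ProbabilityTheory.beta] at h
  rw [h, Complex.betaIntegral]
  have : (∫ x in (0:ℝ)..1, (x:ℂ) ^ ((u:ℂ) - 1) * (1 - (x:ℂ)) ^ ((v:ℂ) - 1)) =
      ∫ x in (0:ℝ)..1, ((x ^ (u - 1) * (1 - x) ^ (v - 1) : ℝ) : ℂ) := by
    refine intervalIntegral.integral_congr fun x hx => ?_
    rw [uIcc_of_le zero_le_one] at hx
    have h1 : 0 ≤ 1 - x := by linarith [hx.2]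
    rw [Complex.ofReal_mul, Complex.ofReal_cpow hx.1, Complex.ofReal_cpow h1]
    push_cast; rfl
  rw [this, intervalIntegral.integral_ofReal, Complex.ofReal_re]

/-- The substitution `y = z ^ 2` turns this into the Beta integral `B((p + 1) / 2, 1 / 2) / 2`. -/
lemma integral_rpow_div_sqrt {p : ℝ} (hp : 1 < p) :
    ∫ z in (0:ℝ)..1, z ^ p / √(1 - z ^ 2) =
      Real.Gamma ((p + 1) / 2) * √π / Real.Gamma (p / 2 + 1) / 2 := by
  have hb := betaIntegral_real (u := (p + 1) / 2) (v := 1 / 2) (by linarith) (by norm_num)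
  rw [Real.Gamma_one_half_eq, show (p + 1) / 2 + 1 / 2 = p / 2 + 1 by ring] at hb
  rw [← hb, eq_div_iff two_ne_zero]
  rw [intervalIntegral.integral_of_le zero_le_one, intervalIntegral.integral_of_le zero_le_one,
    integral_Ioc_eq_integral_Ioo, integral_Ioc_eq_integral_Ioo]
  have hcv := integral_comp_rpow_Ioi_of_pos
    (g := (Ioo (0:ℝ) 1).indicator fun y => y ^ ((p + 1) / 2 - 1) * (1 - y) ^ ((1:ℝ) / 2 - 1))
    (p := 2) two_pos
  have hsub : Ioo (0:ℝ) 1 ⊆ Ioi 0 := fun z hz => hz.1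
  rw [setIntegral_indicator measurableSet_Ioo, inter_eq_right.2 hsub] at hcv
  rw [← hcv, ← integral_mul_const]
  conv_lhs => rw [← inter_eq_right.2 hsub, ← setIntegral_indicator measurableSet_Ioo]
  refine setIntegral_congr_fun measurableSet_Ioi fun z (hz : 0 < z) => ?_
  simp only [smul_eq_mul, Real.rpow_two, show (2:ℝ) - 1 = 1 by norm_num, Real.rpow_one]
  by_cases h1 : z < 1
  · have hm : z ^ 2 ∈ Ioo (0:ℝ) 1 := ⟨by positivity, by nlinarith⟩
    have h0 : 0 < 1 - z ^ 2 := by linarith [hm.2]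
    rw [indicator_of_mem (show z ∈ Ioo (0:ℝ) 1 from ⟨hz, h1⟩), indicator_of_mem hm]
    rw [Real.sqrt_eq_rpow, show (1:ℝ) / 2 - 1 = -(1 / 2) by norm_num, Real.rpow_neg h0.le,
      ← Real.rpow_natCast z 2, ← Real.rpow_mul hz.le,
      show ((2:ℕ):ℝ) * ((p + 1) / 2 - 1) = p - 1 by push_cast; ring, Real.rpow_sub_one hz.ne']
    field_simp
  · rw [indicator_of_notMem (fun h => h1 h.2), indicator_of_notMem (fun h => h1 ?_)]
    · simp
    · nlinarith [h.2]

/-- The value of `ψ(1)`, from integration by parts with `(1 - z ^ 2) ^ (-3/2) = (z / √(1 - z ^ 2))'`: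
the boundary terms vanish, leaving `p ∫₀¹ z ^ p / √(1 - z ^ 2) dz`. -/
lemma psi_one {p : ℝ} (hp : 1 < p) :
    psi p 1 = √π * Real.Gamma ((p + 1) / 2) / Real.Gamma (p / 2) := by
  have hrad : ∀ z : ℝ, radD p 1 z = 1 - z ^ 2 := fun z => by unfold radD; ring
  have hi1 : IntervalIntegrable
      (fun z => (1 - z ^ p) / (radD p 1 z * √(radD p 1 z))) volume 0 1 :=
    intervalIntegrable_of_bound (measurable_psi_integrand _ 1)
      fun z hz => norm_psi_integrand_le hp (by simp) hz
  have hpos : ∀ z ∈ Ioo (0:ℝ) 1, 1 - z ≤ 1 - z ^ 2 := fun z hz => by nlinarith [hz.1, hz.2]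
  have hi2 : IntervalIntegrable (fun z : ℝ => z ^ p / √(1 - z ^ 2)) volume 0 1 := by
    refine intervalIntegrable_of_bound (c := 1) (by fun_prop) fun z hz => ?_
    have h0 : 0 < 1 - z := by linarith [hz.2]
    have h1 := hpos z hz
    have h2 : 0 ≤ z ^ p := Real.rpow_nonneg hz.1.le _
    have h3 := (rpow_le_self_of_Ioo hp hz).trans hz.2.le
    rw [Real.norm_of_nonneg (by positivity)]
    gcongr
  have hcont : ContinuousOn (fun z : ℝ => (1 - z ^ p) * (z / √(1 - z ^ 2))) (Icc 0 1) := by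
    intro z hz
    rcases hz.2.lt_or_eq with h1 | rfl
    · have h0 : 0 < 1 - z ^ 2 := by nlinarith [hz.1]
      have hc : ContinuousAt (fun z : ℝ => z ^ p) z :=
        Real.continuousAt_rpow_const _ _ (Or.inr (by linarith))
      have hc2 : ContinuousAt (fun z : ℝ => √(1 - z ^ 2)) z := by fun_prop
      exact ((continuousAt_const.sub hc).mul
        (continuousAt_id.div hc2 (Real.sqrt_pos.2 h0).ne')).continuousWithinAt
    -- at `z = 1` the function is `0` (division by zero), which is also its limit
    · have hlim : Tendsto (fun z : ℝ => p * √(1 - z)) (𝓝[Icc 0 1] 1) (𝓝 0) := by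
        have : Continuous fun z : ℝ => p * √(1 - z) := by fun_prop
        simpa using (this.tendsto 1).mono_left nhdsWithin_le_nhds
      unfold ContinuousWithinAt
      have e : (fun z : ℝ => (1 - z ^ p) * (z / √(1 - z ^ 2))) 1 = 0 := by simp
      rw [e]
      refine squeeze_zero_norm' ?_ hlim
      filter_upwards [self_mem_nhdsWithin] with z hz
      rcases hz.1.eq_or_lt with rfl | h0
      · simp; linarith
      rcases hz.2.eq_or_lt with rfl | h1
      · simp
      have hz' : z ∈ Ioo (0:ℝ) 1 := ⟨h0, h1⟩
      have h2 : 0 < 1 - z := by linarith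
      have h3 := hpos z hz'
      have h4 := rpow_le_self_of_Ioo hp hz'
      rw [Real.norm_of_nonneg (mul_nonneg (by linarith) (by positivity))]
      calc (1 - z ^ p) * (z / √(1 - z ^ 2)) ≤ (p * (1 - z)) * (1 / √(1 - z)) := by
            gcongr
            exact one_sub_rpow_le hp hz'
        _ = p * √(1 - z) := by
            have := Real.sqrt_pos.2 h2
            have h5 : √(1 - z) ^ 2 = 1 - z := Real.sq_sqrt h2.le
            field_simp
            exact h5.symm
  have hftc := intervalIntegral.integral_eq_sub_of_hasDerivAt_of_le zero_le_one hcont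
    (f' := fun z => (1 - z ^ p) / (radD p 1 z * √(radD p 1 z)) - p * (z ^ p / √(1 - z ^ 2)))
    (fun z hz => ?_) (hi1.sub (hi2.const_mul p))
  · rw [intervalIntegral.integral_sub hi1 (hi2.const_mul p),
      intervalIntegral.integral_const_mul, integral_rpow_div_sqrt hp] at hftc
    have hG : Real.Gamma (p / 2 + 1) = p / 2 * Real.Gamma (p / 2) :=
      Real.Gamma_add_one (by positivity)
    have hGpos : 0 < Real.Gamma (p / 2) := Real.Gamma_pos_of_pos (by positivity)
    rw [hG] at hftc
    have : psi p 1 = p * (Real.Gamma ((p + 1) / 2) * √π / (p / 2 * Real.Gamma (p / 2)) / 2) := by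
      unfold psi
      simp at hftc
      linarith
    rw [this]
    field_simp
  · have h0 : 0 < 1 - z ^ 2 := by linarith [hpos z hz, hz.2]
    have hsq : √(1 - z ^ 2) ^ 2 = 1 - z ^ 2 := Real.sq_sqrt h0.le
    have hr := Real.sqrt_pos.2 h0
    have hd1 : HasDerivAt (fun z : ℝ => 1 - z ^ p) (-(p * z ^ (p - 1))) z :=
      (Real.hasDerivAt_rpow_const (Or.inl hz.1.ne')).const_sub 1
    have hd2 : HasDerivAt (fun z : ℝ => 1 - z ^ 2) (-(2 * z)) z := by
      simpa using ((hasDerivAt_id z).pow 2).const_sub 1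
    have hd := hd1.mul ((hasDerivAt_id z).div (hd2.sqrt h0.ne') hr.ne')
    refine hd.congr_deriv ?_
    rw [hrad, Real.rpow_sub_one hz.1.ne']
    have hz0 := hz.1
    simp only [id, Pi.div_apply]
    generalize √(1 - z ^ 2) = r at *
    rw [← hsq]
    have hz2 : z ^ 2 = 1 - r ^ 2 := by linarith
    field_simp
    rw [hz2]
    ring

/-! ### Behaviour of `φ_s` near `x = 1` -/

lemma strictMonoOn_phiS {s : ℝ} (hs : 2 < s) : StrictMonoOn (phiS s) (Icc 0 1) := by
  refine strictMonoOn_of_deriv_pos (convex_Icc 0 1)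
    ((continuousOn_phiS hs).mono (Icc_subset_Icc_left (by norm_num))) fun x hx => ?_
  rw [interior_Icc] at hx
  have hx' : x ∈ Ioo (-1:ℝ) 1 := ⟨by linarith [hx.1], hx.2⟩
  rw [(hasDerivAt_phiS hs hx').deriv]
  exact psi_pos (by linarith) (Ioo_subset_Icc_self hx')

lemma tendsto_psi {p : ℝ} (hp : 1 < p) : Tendsto (psi p) (𝓝[<] 1) (𝓝 (psi p 1)) := by
  have h : Tendsto (psi p) (𝓝[Icc (-1) 1] 1) (𝓝 (psi p 1)) := continuousOn_psi hp 1 (by simp)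
  refine h.mono_left (nhdsWithin_le_of_mem ?_)
  filter_upwards [Ioo_mem_nhdsLT (show (-1:ℝ) < 1 by norm_num)] with x hx
  exact Ioo_subset_Icc_self hx

lemma hasDerivWithinAt_phiS_one {s : ℝ} (hs : 2 < s) :
    HasDerivWithinAt (phiS s) (psi (s - 1) 1) (Iic 1) 1 := by
  have hmem : Ioo (-1:ℝ) 1 ∈ 𝓝[<] (1:ℝ) := Ioo_mem_nhdsLT (by norm_num)
  refine hasDerivWithinAt_Iic_of_tendsto_deriv (s := Ioo (-1) 1)
    (fun x hx => (hasDerivAt_phiS hs hx).differentiableAt.differentiableWithinAt)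
    ((continuousOn_phiS hs 1 (by simp)).mono Ioo_subset_Icc_self) hmem ?_
  refine (tendsto_psi (by linarith)).congr' ?_
  filter_upwards [hmem] with x hx
  exact (hasDerivAt_phiS hs hx).deriv.symm

/-! ### The limit -/

/-- With `e = 1 - X ^ 2` and `m = 1 + 2 / (s - 1)`, the product `β_s(X) β_s'(X)` is `e ^ (-m)` times a
factor bounded near `X = 1`, and `θ ^ m * e ^ (-m)` is absorbed into `(e / θ) ^ (-m)`. -/
lemma scaling_identity {s θ X Y : ℝ} (hs : 2 < s) (hθ : 0 < θ) (hsin : 0 < Real.sin θ)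
    (hX : X ∈ Ico (0:ℝ) 1) :
    θ ^ (1 + 2 / (s - 1)) * (1 / 2 * (2:ℝ) ^ (4 / (s - 1)) / Real.sin θ *
      (betaS s X * betaS' s X * Y)) * Real.sin θ =
    1 / 2 * (2:ℝ) ^ (4 / (s - 1)) * X * Y *
      (2 / (s - 1) + (s - 3) / (s - 1) * (1 - X ^ 2)) *
      ((1 - X ^ 2) / θ) ^ (-(1 + 2 / (s - 1))) := by
  have he : 0 < 1 - X ^ 2 := by nlinarith [hX.1, hX.2]
  have hp : s - 1 ≠ 0 := by linarith
  unfold betaS betaS'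
  generalize 1 - X ^ 2 = e at *
  have hE : (e / θ) ^ (-(1 + 2 / (s - 1))) =
      θ ^ (1 + 2 / (s - 1)) * e ^ (-(1 + 2 / (s - 1))) := by
    rw [Real.div_rpow he.le hθ.le, Real.rpow_neg hθ.le, div_inv_eq_mul, mul_comm]
  have h1 : e ^ (-(1 / (s - 1))) * e ^ (-(s / (s - 1))) = e ^ (-(1 + 2 / (s - 1))) := by
    rw [← Real.rpow_add he]; congr 1; field_simp; ring
  have h2 : e ^ (-(1 / (s - 1))) * e ^ (-(1 / (s - 1))) = e * e ^ (-(1 + 2 / (s - 1))) := by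
    rw [← Real.rpow_add he, ← Real.rpow_one_add' he.le]
    · congr 1; ring
    · have : 0 < 2 / (s - 1) := div_pos two_pos (by linarith)
      linarith
  rw [hE, div_eq_mul_inv X, ← Real.rpow_neg he.le]
  have h3 : X * e ^ (-(1 / (s - 1))) * (2 / (s - 1) * e ^ (-(s / (s - 1))) +
      (s - 3) / (s - 1) * e ^ (-(1 / (s - 1)))) =
      X * (2 / (s - 1) + (s - 3) / (s - 1) * e) * e ^ (-(1 + 2 / (s - 1))) := by
    linear_combination X * (2 / (s - 1)) * h1 + X * ((s - 3) / (s - 1)) * h2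
  rw [h3]
  field_simp

/-- For `s > 2`, with `x_s` the inverse of `φ_s` and `x_s′` its derivative,
`lim_{θ→0⁺} θ^(1+2/(s−1)) · b_s(cos θ) · sin θ = C_s` where
`C_s = (2^(4/(s−1))/(s−1)) · (√π Γ(s/2)/Γ((s−1)/2))^(2/(s−1))`. -/
theorem stmt11 (xs xs' : ℝ → ℝ → ℝ) (s : ℝ) (hs : 2 < s)
    (hinv : ∀ φ ∈ Ico (0:ℝ) (π / 2), xs s φ ∈ Ico (0:ℝ) 1 ∧ phiS s (xs s φ) = φ)
    (hderiv : ∀ φ ∈ Ico (0:ℝ) (π / 2),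
      HasDerivWithinAt (xs s) (xs' s φ) (Ico 0 (π / 2)) φ) :
    Tendsto (fun θ : ℝ => θ ^ (1 + 2 / (s - 1)) * bAng xs xs' s θ * Real.sin θ)
      (nhdsWithin 0 (Ioi 0))
      (nhds ((2:ℝ) ^ (4 / (s - 1)) / (s - 1) *
        (Real.sqrt π * Real.Gamma (s / 2) / Real.Gamma ((s - 1) / 2)) ^ (2 / (s - 1)))) := by
  have hp : 1 < s - 1 := by linarith
  have hG1 := psi_one hp
  rw [show s - 1 + 1 = s by ring] at hG1
  rw [← hG1]
  have hG : 0 < psi (s - 1) 1 := psi_pos hp (by simp)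
  set G := psi (s - 1) 1 with hGdef
  clear_value G
  have hθ : ∀ᶠ θ in 𝓝[>] (0:ℝ), θ ∈ Ioo (0:ℝ) π := Ioo_mem_nhdsGT Real.pi_pos
  have hmem : ∀ θ ∈ Ioo (0:ℝ) π, (π - θ) / 2 ∈ Ioo (0:ℝ) (π / 2) := fun θ h =>
    ⟨by linarith [h.2], by linarith [h.1]⟩
  have ht : Tendsto (fun θ : ℝ => (π - θ) / 2) (𝓝[>] 0) (𝓝 (π / 2)) := by
    have : Continuous fun θ : ℝ => (π - θ) / 2 := by fun_prop
    simpa using (this.tendsto 0).mono_left nhdsWithin_le_nhds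
  -- strict monotonicity keeps `φ_s` bounded away from `π / 2` on `[0, a]` for `a < 1`
  have hX1 : Tendsto (fun θ : ℝ => xs s ((π - θ) / 2)) (𝓝[>] 0) (𝓝 1) := by
    refine tendsto_order.2 ⟨fun a ha => ?_, fun a ha => ?_⟩
    · have hm : max a 0 ∈ Icc (0:ℝ) 1 := ⟨le_max_right _ _, max_le ha.le zero_le_one⟩
      have hlt : phiS s (max a 0) < π / 2 := by
        rw [← phiS_one s hs]
        exact strictMonoOn_phiS hs hm (by simp) (max_lt ha zero_lt_one)
      filter_upwards [hθ, ht.eventually (lt_mem_nhds hlt)] with θ h1 h2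
      obtain ⟨h3, h4⟩ := hinv _ (Ioo_subset_Ico_self (hmem θ h1))
      rw [← h4] at h2
      exact (le_max_left _ _).trans_lt
        (((strictMonoOn_phiS hs).lt_iff_lt hm (Ico_subset_Icc_self h3)).1 h2)
    · filter_upwards [hθ] with θ h1
      exact (hinv _ (Ioo_subset_Ico_self (hmem θ h1))).1.2.trans ha
  have hX : Tendsto (fun θ : ℝ => xs s ((π - θ) / 2)) (𝓝[>] 0) (𝓝[<] 1) := by
    refine tendsto_nhdsWithin_iff.2 ⟨hX1, ?_⟩
    filter_upwards [hθ] with θ h1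
    exact (hinv _ (Ioo_subset_Ico_self (hmem θ h1))).1.2
  have hY : Tendsto (fun θ : ℝ => xs' s ((π - θ) / 2)) (𝓝[>] 0) (𝓝 G⁻¹) := by
    have h := ((tendsto_psi hp).comp hX).inv₀ (by rw [← hGdef]; exact hG.ne')
    rw [← hGdef] at h
    refine h.congr' ?_
    filter_upwards [hθ] with θ h1
    have h2 := hmem θ h1
    obtain ⟨h3, -⟩ := hinv _ (Ioo_subset_Ico_self h2)
    have hd := (hderiv _ (Ioo_subset_Ico_self h2)).hasDerivAt (Ico_mem_nhds h2.1 h2.2)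
    have hc := (hasDerivAt_phiS hs ⟨by linarith [h3.1], h3.2⟩).comp _ hd
    have hid : HasDerivAt (phiS s ∘ xs s) 1 ((π - θ) / 2) := by
      refine (hasDerivAt_id _).congr_of_eventuallyEq ?_
      filter_upwards [Ico_mem_nhds h2.1 h2.2] with u hu
      exact (hinv u hu).2
    exact inv_eq_of_mul_eq_one_right (hc.unique hid)
  have hE : Tendsto (fun θ : ℝ => (1 - xs s ((π - θ) / 2) ^ 2) / θ) (𝓝[>] 0) (𝓝 G⁻¹) := by
    have hsl := hasDerivWithinAt_iff_tendsto_slope.1 (hasDerivWithinAt_phiS_one hs)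
    rw [Iic_sdiff_right, ← hGdef] at hsl
    -- `1 - X ^ 2 = (1 + X) * (1 - X)`, and `φ_s(1) - φ_s(X) = θ / 2`
    have h := ((hX1.const_add 1).div_const 2).mul ((hsl.comp hX).inv₀ hG.ne')
    rw [show (1 + 1) / 2 * G⁻¹ = G⁻¹ by ring] at h
    refine h.congr' ?_
    filter_upwards [hθ] with θ h1
    obtain ⟨h3, h4⟩ := hinv _ (Ioo_subset_Ico_self (hmem θ h1))
    have h5 : xs s ((π - θ) / 2) - 1 ≠ 0 := by linarith [h3.2]
    have h6 := h1.1
    rw [Function.comp_apply, slope_def_field, h4, phiS_one s hs,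
      show (π - θ) / 2 - π / 2 = -(θ / 2) by ring]
    field_simp
    ring
  have hlim := ((((hX1.const_mul (1 / 2 * (2:ℝ) ^ (4 / (s - 1)))).mul hY).mul
    ((((hX1.pow 2).const_sub 1).const_mul ((s - 3) / (s - 1))).const_add (2 / (s - 1)))).mul
    (hE.rpow_const (p := -(1 + 2 / (s - 1))) (Or.inl (inv_pos.2 hG).ne')))
  have hval : 1 / 2 * (2:ℝ) ^ (4 / (s - 1)) * 1 * G⁻¹ *
      (2 / (s - 1) + (s - 3) / (s - 1) * (1 - 1 ^ 2)) * G⁻¹ ^ (-(1 + 2 / (s - 1))) =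
      (2:ℝ) ^ (4 / (s - 1)) / (s - 1) * G ^ (2 / (s - 1)) := by
    rw [Real.rpow_neg (inv_pos.2 hG).le, Real.inv_rpow hG.le, inv_inv, Real.rpow_add hG,
      Real.rpow_one]
    field_simp
    ring
  rw [hval] at hlim
  refine hlim.congr' ?_
  filter_upwards [hθ] with θ h1
  exact (scaling_identity hs h1.1 (Real.sin_pos_of_mem_Ioo h1)
    (hinv _ (Ioo_subset_Ico_self (hmem θ h1))).1).symm
end

section
/- Define ψ_s(ξ) = 2√s·(π/2 − φ_s(1 − ξ/(2s))) for s > 2 and ξ ∈ [0, 2s], where φ_s(x) = x ∫₀¹ dz / √(1 − z^{s−1} − x²(z² − z^{s−1})). Then as s → ∞, ψ_s(ξ) converges locally uniformly on [0,∞) to ψ_∞(ξ) = 2ξ ∫₀^∞ (1 − e^{−ζ}) / ( √(2ζ) · √(h(ζ,ξ)) · (√(2ζ) + √(h(ζ,ξ))) ) dζ, where h(ζ,ξ) = 2ζ + ξ(1 − e^{−ζ}). -/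
/-!
Since `π / 2 = ∫₀¹ dz / √(1 - z²)`, the quantity `π / 2 - φ_s(x)` with `x = 1 - ξ / (2s)` is
`(1 - x) π / 2` plus `x` times the integral of the difference `1 / √a - 1 / √b`, where
`a = 1 - z²` and `b = a + (1 - x²)(z² - z^(s-1))`. The first part contributes `O(1 / √s)` to `ψ_s`.
In the second one, the substitution `z = 1 - ζ / s` turns `2 √s ∫ (1 / √a - 1 / √b) dz` into
`2 ∫₀^s (1 / √A - 1 / √B) dζ` with `A = s a → 2ζ` and `B = s b → h(ζ, ξ)` (`psiS_eq`). The integrand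
of `ψ_∞`, multiplied by `ξ`, is `1 / √(2ζ) - 1 / √h` (`psiInf_eq`).

Locally uniform convergence follows from joint convergence along `atTop ×ˢ 𝓝[≥] ξ₀` together with
the continuity of `ψ_∞`. Both are instances of dominated convergence: in either case the two
radicands differ by at most `K min(1, ζ)` (by Bernoulli's inequality for `A` and `B`) and the smaller
one is at least `ζ`, so `K min(1, ζ) ζ^(-3/2)` is an integrable bound.
-/

open Real Set MeasureTheory Filter

/-- The rescaled deviation-angle function `ψ_s(ξ) = 2√s(π/2 − φ_s(1 − ξ/(2s)))`. -/
noncomputable def psiS (s ξ : ℝ) : ℝ := 2 * Real.sqrt s * (π / 2 - phiS s (1 - ξ / (2 * s)))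

/-- `h(ζ,ξ) = 2ζ + ξ(1 − e^(−ζ))`. -/
noncomputable def hLim (ζ ξ : ℝ) : ℝ := 2 * ζ + ξ * (1 - Real.exp (-ζ))

/-- The limiting rescaled deviation-angle function
`ψ_∞(ξ) = 2ξ ∫₀^∞ (1 − e^(−ζ)) / (√(2ζ) √(h(ζ,ξ)) (√(2ζ) + √(h(ζ,ξ)))) dζ`. -/
noncomputable def psiInf (ξ : ℝ) : ℝ :=
  2 * ξ * ∫ ζ in Ioi (0:ℝ),
    (1 - Real.exp (-ζ)) /
      (Real.sqrt (2 * ζ) * Real.sqrt (hLim ζ ξ) * (Real.sqrt (2 * ζ) + Real.sqrt (hLim ζ ξ)))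

open scoped Topology

/-- The radicand `1 - z²` of the integral for `π / 2` at `z = 1 - ζ / s`, multiplied by `s`. -/
noncomputable def radA (s ζ : ℝ) : ℝ := s * (1 - (1 - ζ / s) ^ 2)

/-- The radicand of `φ_s(1 - ξ / (2s))` at `z = 1 - ζ / s`, multiplied by `s`. -/
noncomputable def radB (s ξ ζ : ℝ) : ℝ :=
  s * (1 - (1 - ζ / s) ^ (s - 1)
    - (1 - ξ / (2 * s)) ^ 2 * ((1 - ζ / s) ^ 2 - (1 - ζ / s) ^ (s - 1)))

/-- The integrand of the rescaled problem, extended by zero beyond `ζ = s`. -/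
noncomputable def gS (s ξ ζ : ℝ) : ℝ :=
  (Ioc 0 s).indicator (fun ζ => 1 / √(radA s ζ) - 1 / √(radB s ξ ζ)) ζ

lemma radB_eq {s : ℝ} (hs : s ≠ 0) (ξ ζ : ℝ) :
    radB s ξ ζ = radA s ζ
      + (ξ - ξ ^ 2 / (4 * s)) * ((1 - ζ / s) ^ 2 - (1 - ζ / s) ^ (s - 1)) := by
  unfold radB radA
  generalize (1 - ζ / s) ^ (s - 1) = w
  generalize 1 - ζ / s = z
  field_simp
  ring

lemma radA_eq {s : ℝ} (hs : s ≠ 0) (ζ : ℝ) : radA s ζ = 2 * ζ - ζ ^ 2 / s := by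
  unfold radA
  field_simp
  ring

/-- The dominating function, up to a constant factor. -/
noncomputable def domG (ζ : ℝ) : ℝ := min 1 ζ * ζ ^ (-(3 / 2) : ℝ)

lemma integrableOn_domG : IntegrableOn domG (Ioi 0) := by
  rw [← Ioc_union_Ioi_eq_Ioi (zero_le_one (α := ℝ))]
  refine IntegrableOn.union ?_ ?_
  · have h : IntegrableOn (fun x : ℝ => x ^ (-(1 / 2) : ℝ)) (Ioc 0 1) :=
      (intervalIntegrable_iff_integrableOn_Ioc_of_le zero_le_one).1
        (intervalIntegral.intervalIntegrable_rpow' (by norm_num))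
    refine h.congr_fun (fun x hx => ?_) measurableSet_Ioc
    simp only [domG]
    rw [min_eq_right hx.2]
    nth_rewrite 2 [← Real.rpow_one x]
    rw [← Real.rpow_add hx.1]
    norm_num
  · have h : IntegrableOn (fun x : ℝ => x ^ (-(3 / 2) : ℝ)) (Ioi 1) :=
      integrableOn_Ioi_rpow_of_lt (by norm_num) one_pos
    refine h.congr_fun (fun x hx => ?_) measurableSet_Ioi
    simp only [domG]
    rw [min_eq_left (le_of_lt hx), one_mul]

lemma one_div_sqrt_sub {a b : ℝ} (ha : 0 < a) (hb : 0 < b) :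
    1 / √a - 1 / √b = (b - a) / (√a * √b * (√a + √b)) := by
  have h1 := Real.sqrt_pos.2 ha
  have h2 := Real.sqrt_pos.2 hb
  have e : b - a = √b ^ 2 - √a ^ 2 := by rw [Real.sq_sqrt ha.le, Real.sq_sqrt hb.le]
  rw [e]
  field_simp
  ring

/-- The bound behind both applications of dominated convergence. -/
lemma abs_diff_le {ζ a b K : ℝ} (hζ : 0 < ζ) (ha : ζ ≤ a) (hab : a ≤ b)
    (hb : b - a ≤ K * min 1 ζ) : ‖1 / √a - 1 / √b‖ ≤ K * domG ζ := by
  have h0 := Real.sqrt_pos.2 hζ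
  have h1 := Real.sqrt_le_sqrt ha
  have h2 := Real.sqrt_le_sqrt (ha.trans hab)
  have hpow : ζ ^ (-(3 / 2) : ℝ) = 1 / (√ζ * √ζ * √ζ) := by
    rw [Real.sqrt_eq_rpow, ← Real.rpow_add hζ, ← Real.rpow_add hζ, Real.rpow_neg hζ.le, one_div]
    norm_num
  rw [one_div_sqrt_sub (hζ.trans_le ha) (hζ.trans_le (ha.trans hab)), Real.norm_of_nonneg
    (div_nonneg (by linarith) (by positivity)), domG, hpow, ← mul_assoc, mul_one_div]
  have : 0 ≤ √a := Real.sqrt_nonneg a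
  gcongr
  · linarith
  · linarith

lemma norm_gS_le {s ξ K : ℝ} (hs : 3 ≤ s) (hξ : 0 ≤ ξ) (hξs : ξ ≤ 2 * s) (hK : ξ ≤ K) {ζ : ℝ}
    (hζ : 0 < ζ) : ‖gS s ξ ζ‖ ≤ K * domG ζ := by
  have hs0 : 0 < s := by linarith
  have hmin : 0 ≤ min 1 ζ := le_min zero_le_one hζ.le
  unfold gS
  by_cases hm : ζ ∈ Ioc 0 s
  swap
  · rw [indicator_of_notMem hm, norm_zero]
    exact mul_nonneg (hξ.trans hK) (mul_nonneg hmin (Real.rpow_nonneg hζ.le _))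
  rw [indicator_of_mem hm]
  have hq : ζ / s ≤ 1 := (div_le_one hs0).2 hm.2
  have hq0 : 0 ≤ ζ / s := by positivity
  have hz0 : 0 ≤ 1 - ζ / s := by linarith
  have hz1 : 1 - ζ / s ≤ 1 := by linarith
  have hw0 : 0 ≤ (1 - ζ / s) ^ (s - 1) := Real.rpow_nonneg hz0 _
  have hw : (1 - ζ / s) ^ (s - 1) ≤ (1 - ζ / s) ^ 2 := by
    have := Real.rpow_le_rpow_of_exponent_ge' hz0 hz1 (by norm_num : (0:ℝ) ≤ 2)
      (by linarith : (2:ℝ) ≤ s - 1)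
    simpa using this
  have hbern : 1 - ζ ≤ (1 - ζ / s) ^ (s - 1) := by
    have := one_add_mul_self_le_rpow_one_add (s := -(ζ / s)) (by linarith)
      (p := s - 1) (by linarith)
    have e : s * (ζ / s) = ζ := by field_simp
    rw [← sub_eq_add_neg] at this
    nlinarith
  have hc0 : 0 ≤ ξ - ξ ^ 2 / (4 * s) := by
    rw [sub_nonneg, div_le_iff₀ (by positivity)]
    nlinarith
  have hcK : ξ - ξ ^ 2 / (4 * s) ≤ K := by
    have : 0 ≤ ξ ^ 2 / (4 * s) := by positivity
    linarith
  have hsq : (1 - ζ / s) ^ 2 ≤ 1 := pow_le_one₀ hz0 hz1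
  have hd : (1 - ζ / s) ^ 2 - (1 - ζ / s) ^ (s - 1) ≤ min 1 ζ :=
    le_min (by linarith) (by linarith)
  refine abs_diff_le hζ ?_ ?_ ?_
  · rw [radA_eq hs0.ne']
    have : ζ ^ 2 / s ≤ ζ := by
      rw [div_le_iff₀ hs0]
      nlinarith [hm.2]
    linarith
  · rw [radB_eq hs0.ne']
    have := mul_nonneg hc0 (sub_nonneg.2 hw)
    linarith
  · rw [radB_eq hs0.ne', add_sub_cancel_left]
    exact mul_le_mul hcK hd (sub_nonneg.2 hw) (hξ.trans hK)

lemma measurable_gS (s ξ : ℝ) : Measurable (gS s ξ) := by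
  unfold gS radA radB
  refine Measurable.indicator ?_ measurableSet_Ioc
  fun_prop

lemma hasDerivAt_arcsin' {z : ℝ} (hz : z ∈ Ioo (0:ℝ) 1) :
    HasDerivAt Real.arcsin (1 / √(1 - z ^ 2)) z :=
  Real.hasDerivAt_arcsin (by linarith [hz.1]) (by linarith [hz.2])

lemma intervalIntegrable_one_div_sqrt :
    IntervalIntegrable (fun z : ℝ => 1 / √(1 - z ^ 2)) volume 0 1 := by
  refine intervalIntegral.intervalIntegrable_deriv_of_nonneg (g := Real.arcsin)
    Real.continuous_arcsin.continuousOn (fun z hz => ?_) (fun z hz => by positivity)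
  rw [min_eq_left zero_le_one, max_eq_right zero_le_one] at hz
  exact hasDerivAt_arcsin' hz

lemma integral_one_div_sqrt : ∫ z in (0:ℝ)..1, 1 / √(1 - z ^ 2) = π / 2 := by
  rw [intervalIntegral.integral_eq_sub_of_hasDerivAt_of_le zero_le_one
    Real.continuous_arcsin.continuousOn (fun z hz => hasDerivAt_arcsin' hz)
    intervalIntegrable_one_div_sqrt]
  simp

lemma intervalIntegrable_phiS {s x : ℝ} (hs : 3 ≤ s) (hx0 : 0 ≤ x) (hx1 : x ≤ 1) :
    IntervalIntegrable (fun z : ℝ => 1 / √(1 - z ^ (s - 1) - x ^ 2 * (z ^ 2 - z ^ (s - 1))))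
      volume 0 1 := by
  refine intervalIntegrable_one_div_sqrt.mono_fun' ?_ ?_
  · refine Measurable.aestronglyMeasurable ?_
    fun_prop
  · refine (ae_restrict_iff' measurableSet_uIoc).2 (ae_of_all _ fun z hz => ?_)
    rw [uIoc_of_le zero_le_one] at hz
    simp only
    rw [Real.norm_of_nonneg (by positivity)]
    rcases hz.2.eq_or_lt with h | h
    -- at `z = 1` both radicands vanish, so both quotients are `1 / 0 = 0`
    · simp [h]
    · have hw : z ^ (s - 1) ≤ z ^ 2 := by
        have := Real.rpow_le_rpow_of_exponent_ge' hz.1.le hz.2 (by norm_num : (0:ℝ) ≤ 2)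
          (by linarith : (2:ℝ) ≤ s - 1)
        simpa using this
      have hx : x ^ 2 ≤ 1 := pow_le_one₀ hx0 hx1
      have hp : 0 < 1 - z ^ 2 := by nlinarith [hz.1]
      refine one_div_le_one_div_of_le (Real.sqrt_pos.2 hp) (Real.sqrt_le_sqrt ?_)
      nlinarith [mul_nonneg (sub_nonneg.2 hx) (sub_nonneg.2 hw)]

/-- The substitution `z = 1 - ζ / s`, after splitting `π / 2 = (1 - x) π / 2 + x π / 2`. -/
lemma psiS_eq {s ξ : ℝ} (hs : 3 ≤ s) (hξ : 0 ≤ ξ) (hξs : ξ ≤ 2 * s) :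
    psiS s ξ = ξ * π / 2 * (√s)⁻¹ + 2 * (1 - ξ / (2 * s)) * ∫ ζ in Ioi (0:ℝ), gS s ξ ζ := by
  have hs0 : 0 < s := by linarith
  have hr : 0 < √s := Real.sqrt_pos.2 hs0
  set f : ℝ → ℝ := fun z => 1 / √(1 - z ^ 2)
    - 1 / √(1 - z ^ (s - 1) - (1 - ξ / (2 * s)) ^ 2 * (z ^ 2 - z ^ (s - 1))) with hf
  have hq : ξ / (2 * s) ≤ 1 := (div_le_one (by positivity)).2 hξs
  have hq0 : 0 ≤ ξ / (2 * s) := by positivity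
  have hsub : ∫ z in (0:ℝ)..1, f z = π / 2
      - ∫ z in (0:ℝ)..1,
          1 / √(1 - z ^ (s - 1) - (1 - ξ / (2 * s)) ^ 2 * (z ^ 2 - z ^ (s - 1))) := by
    rw [← integral_one_div_sqrt]
    exact intervalIntegral.integral_sub intervalIntegrable_one_div_sqrt
      (intervalIntegrable_phiS hs (by linarith) (by linarith))
  have hcv : ∫ ζ in (0:ℝ)..s, f (1 - ζ / s) = s * ∫ z in (0:ℝ)..1, f z := by
    rw [intervalIntegral.integral_comp_sub_div f hs0.ne' 1]
    simp [div_self hs0.ne']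
  have hg : ∫ ζ in Ioi (0:ℝ), gS s ξ ζ = (√s)⁻¹ * ∫ ζ in (0:ℝ)..s, f (1 - ζ / s) := by
    unfold gS
    rw [setIntegral_indicator measurableSet_Ioc,
      inter_eq_right.2 (Ioc_subset_Ioi_self : Ioc (0:ℝ) s ⊆ Ioi 0),
      intervalIntegral.integral_of_le hs0.le, ← integral_const_mul]
    refine integral_congr_ae (ae_of_all _ fun ζ => ?_)
    simp only [hf, radA, radB]
    rw [Real.sqrt_mul hs0.le, Real.sqrt_mul hs0.le]
    simp only [one_div, mul_inv]
    exact (mul_sub _ _ _).symm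
  rw [hg, hcv, hsub, psiS, phiS]
  have e : (√s)⁻¹ * s = √s := by
    rw [inv_mul_eq_div, Real.div_sqrt]
  generalize (∫ z in (0:ℝ)..1,
    1 / √(1 - z ^ (s - 1) - (1 - ξ / (2 * s)) ^ 2 * (z ^ 2 - z ^ (s - 1)))) = J
  have e2 : (√s)⁻¹ = √s / s := by
    rw [Real.sqrt_div_self']
    simp
  rw [← mul_assoc _ s, e, e2]
  field_simp
  ring

lemma hLim_pos {ζ ξ : ℝ} (hζ : 0 < ζ) (hξ : 0 ≤ ξ) : 2 * ζ ≤ hLim ζ ξ := by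
  have : Real.exp (-ζ) ≤ 1 := Real.exp_le_one_iff.2 (by linarith)
  unfold hLim
  nlinarith

lemma psiInf_eq {ξ : ℝ} (hξ : 0 ≤ ξ) :
    psiInf ξ = 2 * ∫ ζ in Ioi (0:ℝ), (1 / √(2 * ζ) - 1 / √(hLim ζ ξ)) := by
  unfold psiInf
  rw [mul_assoc, ← integral_const_mul]
  congr 1
  refine setIntegral_congr_fun measurableSet_Ioi fun ζ hζ => ?_
  have hζ' : (0:ℝ) < ζ := hζ
  have h2 := hLim_pos hζ' hξ
  rw [one_div_sqrt_sub (by linarith) (by linarith), ← mul_div_assoc]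
  congr 1
  unfold hLim
  ring

/-- `ψ_∞` is continuous on `[0, ∞)`, by dominated convergence. -/
lemma tendsto_psiInf {ξ₀ : ℝ} (h₀ : 0 ≤ ξ₀) :
    Tendsto psiInf (𝓝[Ici 0] ξ₀) (𝓝 (psiInf ξ₀)) := by
  have hev : ∀ᶠ ξ in 𝓝[Ici 0] ξ₀, 0 ≤ ξ := eventually_mem_nhdsWithin
  have hev' : ∀ᶠ ξ in 𝓝[Ici 0] ξ₀, ξ ≤ ξ₀ + 1 :=
    eventually_nhdsWithin_of_eventually_nhds (eventually_le_nhds (by linarith))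
  rw [psiInf_eq h₀]
  refine Tendsto.congr' (hev.mono fun ξ hξ => (psiInf_eq hξ).symm) (Tendsto.const_mul 2 ?_)
  refine tendsto_integral_filter_of_dominated_convergence (fun ζ => (ξ₀ + 1) * domG ζ) ?_ ?_
    (integrableOn_domG.const_mul _) ?_
  · refine Eventually.of_forall fun ξ => Measurable.aestronglyMeasurable ?_
    unfold hLim
    fun_prop
  · filter_upwards [hev, hev'] with ξ hξ hξ'
    refine (ae_restrict_iff' measurableSet_Ioi).2 (ae_of_all _ fun ζ hζ => ?_)
    have hζ' : (0:ℝ) < ζ := hζ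
    refine abs_diff_le hζ' (by linarith) (hLim_pos hζ' hξ) ?_
    unfold hLim
    rw [add_sub_cancel_left]
    have h1 : Real.exp (-ζ) ≤ 1 := Real.exp_le_one_iff.2 (by linarith)
    have h2 := Real.exp_pos (-ζ)
    have h3 := Real.add_one_le_exp (-ζ)
    exact mul_le_mul hξ' (le_min (by linarith) (by linarith)) (by linarith) (by linarith)
  · refine (ae_restrict_iff' measurableSet_Ioi).2 (ae_of_all _ fun ζ hζ => ?_)
    have hζ' : (0:ℝ) < ζ := hζ
    have hpos : 0 < hLim ζ ξ₀ := by linarith [hLim_pos hζ' h₀]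
    have hc : ContinuousAt (fun ξ => 1 / √(2 * ζ) - 1 / √(hLim ζ ξ)) ξ₀ := by
      refine continuousAt_const.sub (continuousAt_const.div ?_ (Real.sqrt_pos.2 hpos).ne')
      unfold hLim
      fun_prop
    exact hc.tendsto.mono_left nhdsWithin_le_nhds

/-- `(1 - ζ / s)^(s - 1) → e^(-ζ)` as `s → ∞`. -/
lemma tendsto_pow_exp (ζ : ℝ) :
    Tendsto (fun s : ℝ => (1 - ζ / s) ^ (s - 1)) atTop (𝓝 (Real.exp (-ζ))) := by
  have h1 := Real.tendsto_one_add_div_rpow_exp (-ζ)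
  have h2 : Tendsto (fun s : ℝ => 1 - ζ / s) atTop (𝓝 1) := by
    simpa using (tendsto_const_nhds (x := (1:ℝ))).sub
      ((tendsto_const_nhds (x := ζ)).div_atTop tendsto_id)
  have h3 := h1.div h2 one_ne_zero
  rw [div_one] at h3
  refine h3.congr' ?_
  filter_upwards [h2.eventually (lt_mem_nhds one_pos)] with s hs
  rw [Real.rpow_sub_one hs.ne', Pi.div_apply, neg_div, ← sub_eq_add_neg]

lemma tendsto_gS {ξ₀ : ℝ} (h₀ : 0 ≤ ξ₀) {ζ : ℝ} (hζ : 0 < ζ) :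
    Tendsto (fun q : ℝ × ℝ => gS q.1 q.2 ζ) (atTop ×ˢ 𝓝[Ici 0] ξ₀)
      (𝓝 (1 / √(2 * ζ) - 1 / √(hLim ζ ξ₀))) := by
  have hs : Tendsto (fun q : ℝ × ℝ => q.1) (atTop ×ˢ 𝓝[Ici 0] ξ₀) atTop := tendsto_fst
  have hξ : Tendsto (fun q : ℝ × ℝ => q.2) (atTop ×ˢ 𝓝[Ici 0] ξ₀) (𝓝 ξ₀) :=
    tendsto_snd.mono_right nhdsWithin_le_nhds
  have hw := (tendsto_pow_exp ζ).comp hs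
  have hz : Tendsto (fun q : ℝ × ℝ => 1 - ζ / q.1) (atTop ×ˢ 𝓝[Ici 0] ξ₀) (𝓝 1) := by
    simpa using (tendsto_const_nhds (x := (1:ℝ))).sub
      ((tendsto_const_nhds (x := ζ)).div_atTop hs)
  have hA : Tendsto (fun q : ℝ × ℝ => radA q.1 ζ) (atTop ×ˢ 𝓝[Ici 0] ξ₀) (𝓝 (2 * ζ)) := by
    have : Tendsto (fun q : ℝ × ℝ => 2 * ζ - ζ ^ 2 / q.1) (atTop ×ˢ 𝓝[Ici 0] ξ₀)
        (𝓝 (2 * ζ - 0)) := tendsto_const_nhds.sub (tendsto_const_nhds.div_atTop hs)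
    rw [sub_zero] at this
    refine this.congr' ?_
    filter_upwards [hs.eventually_gt_atTop 0] with q hq
    rw [radA_eq hq.ne']
  have hB : Tendsto (fun q : ℝ × ℝ => radB q.1 q.2 ζ) (atTop ×ˢ 𝓝[Ici 0] ξ₀)
      (𝓝 (hLim ζ ξ₀)) := by
    have h4 : Tendsto (fun q : ℝ × ℝ => q.2 ^ 2 / (4 * q.1)) (atTop ×ˢ 𝓝[Ici 0] ξ₀) (𝓝 0) :=
      (hξ.pow 2).div_atTop (hs.const_mul_atTop (by norm_num))
    have := hA.add ((hξ.sub h4).mul ((hz.pow 2).sub hw))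
    rw [sub_zero, one_pow] at this
    refine this.congr' ?_
    filter_upwards [hs.eventually_gt_atTop 0] with q hq
    rw [radB_eq hq.ne']
    rfl
  have hpos : 0 < hLim ζ ξ₀ := by linarith [hLim_pos hζ h₀]
  have hlim := (tendsto_const_nhds.div hA.sqrt
      (Real.sqrt_pos.2 (by linarith : 0 < 2 * ζ)).ne' : Tendsto _ _ (𝓝 (1 / √(2 * ζ)))).sub
    (tendsto_const_nhds.div hB.sqrt (Real.sqrt_pos.2 hpos).ne' :
      Tendsto _ _ (𝓝 (1 / √(hLim ζ ξ₀))))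
  refine hlim.congr' ?_
  filter_upwards [hs.eventually_ge_atTop ζ] with q hq
  have hm : ζ ∈ Ioc 0 q.1 := ⟨hζ, hq⟩
  rw [gS, indicator_of_mem hm]
  rfl

/-- Joint convergence of `ψ_s(ξ)` as `s → ∞` and `ξ → ξ₀` within `[0, ∞)`. -/
lemma tendsto_psiS {ξ₀ : ℝ} (h₀ : 0 ≤ ξ₀) :
    Tendsto (fun q : ℝ × ℝ => psiS q.1 q.2) (atTop ×ˢ 𝓝[Ici 0] ξ₀) (𝓝 (psiInf ξ₀)) := by
  have hs : Tendsto (fun q : ℝ × ℝ => q.1) (atTop ×ˢ 𝓝[Ici 0] ξ₀) atTop := tendsto_fst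
  have hξ : Tendsto (fun q : ℝ × ℝ => q.2) (atTop ×ˢ 𝓝[Ici 0] ξ₀) (𝓝 ξ₀) :=
    tendsto_snd.mono_right nhdsWithin_le_nhds
  have hev : ∀ᶠ q : ℝ × ℝ in atTop ×ˢ 𝓝[Ici 0] ξ₀, 0 ≤ q.2 :=
    tendsto_snd.eventually (p := fun y : ℝ => 0 ≤ y) eventually_mem_nhdsWithin
  have hev' : ∀ᶠ q : ℝ × ℝ in atTop ×ˢ 𝓝[Ici 0] ξ₀, q.2 ≤ ξ₀ + 1 :=
    hξ.eventually (eventually_le_nhds (by linarith))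
  have h3 := hs.eventually_ge_atTop 3
  have h4 := hs.eventually_ge_atTop (ξ₀ + 1)
  have hint : Tendsto (fun q : ℝ × ℝ => ∫ ζ in Ioi (0:ℝ), gS q.1 q.2 ζ) (atTop ×ˢ 𝓝[Ici 0] ξ₀)
      (𝓝 (∫ ζ in Ioi (0:ℝ), (1 / √(2 * ζ) - 1 / √(hLim ζ ξ₀)))) := by
    refine tendsto_integral_filter_of_dominated_convergence (fun ζ => (ξ₀ + 1) * domG ζ) ?_ ?_
      (integrableOn_domG.const_mul _) ?_
    · exact Eventually.of_forall fun q => (measurable_gS _ _).aestronglyMeasurable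
    · filter_upwards [hev, hev', h3, h4] with q h1 h2 h3 h4
      exact (ae_restrict_iff' measurableSet_Ioi).2
        (ae_of_all _ fun ζ hζ => norm_gS_le h3 h1 (by linarith) h2 hζ)
    · exact (ae_restrict_iff' measurableSet_Ioi).2 (ae_of_all _ fun ζ hζ => tendsto_gS h₀ hζ)
  have hsq : Tendsto (fun q : ℝ × ℝ => (√q.1)⁻¹) (atTop ×ˢ 𝓝[Ici 0] ξ₀) (𝓝 0) :=
    (tendsto_inv_atTop_zero.comp Real.tendsto_sqrt_atTop).comp hs
  have hx : Tendsto (fun q : ℝ × ℝ => 1 - q.2 / (2 * q.1)) (atTop ×ˢ 𝓝[Ici 0] ξ₀) (𝓝 (1 - 0)) :=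
    tendsto_const_nhds.sub (hξ.div_atTop (hs.const_mul_atTop (by norm_num)))
  have key := (((hξ.mul_const π).div_const 2).mul hsq).add ((hx.const_mul 2).mul hint)
  rw [mul_zero, zero_add, sub_zero, mul_one, ← psiInf_eq h₀] at key
  refine key.congr' ?_
  filter_upwards [hev, hev', h3, h4] with q h1 h2 h3 h4
  rw [psiS_eq h3 h1 (by linarith)]

/-- As `s → ∞`, `ψ_s → ψ_∞` locally uniformly on `[0,∞)`. -/
theorem stmt16 :
    TendstoLocallyUniformlyOn (fun s ξ => psiS s ξ) psiInf atTop (Ici 0) := by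
  rw [tendstoLocallyUniformlyOn_iff_filter]
  intro ξ₀ h₀
  rw [tendstoUniformlyOnFilter_iff_tendsto]
  -- both components converge to the same point, and its neighbourhood filter refines `𝓤 ℝ`
  exact (((tendsto_psiInf h₀).comp tendsto_snd).prodMk_nhds (tendsto_psiS h₀)).mono_right
    (nhds_le_uniformity _)
end
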